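/- arXiv:1810.13275 — 2 statements merged into one kernel-verified Lean document; each statement's English description precedes it below -/
import Mathlib

section
/- Let τ = (τ, ℓ) be a decorated tree. There exists a finite set U(τ) of decorated trees, each of weight at most 2·w(τ), and positive real constants C(τ,σ) for σ ∈ U(τ), such that for every finite tree T: F_{τ+τ}(T) = Σ_{σ ∈ U(τ)} C(τ,σ)·F_σ(T). -/
/-!
Two embeddings `φ₁, φ₂` of `τ` in a tree `T` with intersecting images have as union a subtree
of `T`. Labelling the vertices of this subtree by `Fin n` turns it into a tree `σ` covered by two
overlapping copies of `τ` (a `Gluing`), together with an embedding `ψ : σ ↪g T`. There are exactly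
`n!` labellings, so (`sum_overlap_eq`)

  `F_{τ+τ}(T) = ∑_n (1/n!) ∑_{gluings (σ, ι₁, ι₂)} ∑_{ψ : σ ↪g T} π(ψ ∘ ι₁) π(ψ ∘ ι₂)`.

At each vertex of `σ` the summand is a product `[x]_p [x]_q` of descending factorials with
`x = deg_T - 1`, and `[x]_p [x]_q` is a combination of the `[x]_d` with `max p q ≤ d ≤ p + q` and
nonnegative coefficients (`exists_descFactorial_mul`). Expanding the product over the vertices gives
a nonnegative combination of observables `F_{(σ, d)}(T)`.

The weight bound (`weightG_gluing_le`) holds because the decorations of `(σ, d)` have total at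
most `2|ℓ|`, while a loose leaf of `(σ, d)` is the image under `ι₁` or `ι₂` of a loose leaf of `τ`.
The cases where one of `τ`, `σ` has at most two vertices, all of decoration zero, are treated
separately.
-/

open MeasureTheory Filter Asymptotics

noncomputable section

namespace AffinePA

instance (V : Type*) : MeasurableSpace (SimpleGraph V) := ⊤

/-- The degree of a vertex. -/
def degR {V : Type*} (G : SimpleGraph V) (v : V) : ℕ := Nat.card {w // G.Adj v w}

/-- The tree on `n+1` vertices obtained from `G` by attaching the new vertex to `u`. -/
def extendTree {n : ℕ} (G : SimpleGraph (Fin n)) (u : Fin n) : SimpleGraph (Fin (n + 1)) :=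
  SimpleGraph.fromRel fun a b =>
    (∃ a' b' : Fin n, a = Fin.castSucc a' ∧ b = Fin.castSucc b' ∧ G.Adj a' b') ∨
      (a = Fin.castSucc u ∧ b = Fin.last n)

/-- One step of the affine preferential attachment dynamics. -/
def stepMeasure (α : ℝ) {n : ℕ} (G : SimpleGraph (Fin n)) :
    Measure (SimpleGraph (Fin (n + 1))) :=
  ∑ u : Fin n,
    ENNReal.ofReal (((degR G u : ℝ) - 1 + α) / ((1 + α) * (n : ℝ) - 2)) •
      Measure.dirac (extendTree G u)

/-- The law of the α-PA tree with `m` added vertices, started from the seed `S`. -/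
def paLaw (α : ℝ) {k : ℕ} (S : SimpleGraph (Fin k)) :
    (m : ℕ) → Measure (SimpleGraph (Fin (k + m)))
  | 0 => Measure.dirac S
  | m + 1 => (paLaw α S m).bind (stepMeasure α)

/-- The weight `∏_u [deg_T(f u) - 1]_{ℓ u}` of a map `f`. -/
def embWeight {V W : Type*} [Fintype V] (T : SimpleGraph W) (ℓ : V → ℕ) (f : V → W) : ℝ :=
  ∏ u : V, ((degR T (f u) - 1).descFactorial (ℓ u) : ℝ)

/-- The observable `F_{(τ,ℓ)}(T)`. -/
def obsG {V W : Type*} [Fintype V] (τ : SimpleGraph V) (ℓ : V → ℕ) (T : SimpleGraph W) : ℝ :=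
  ∑ᶠ φ : τ ↪g T, embWeight T ℓ ⇑φ

/-- The weight `w(τ,ℓ)` of a decorated tree. -/
def weightG {V : Type*} [Fintype V] (τ : SimpleGraph V) (ℓ : V → ℕ) : ℕ :=
  if Fintype.card V ≤ 2 ∧ ∀ v, ℓ v = 0 then 1
  else (∑ v, ℓ v) + Nat.card {v // degR τ v = 1 ∧ ℓ v = 0}

/-- A decorated tree: a finite graph on `Fin n` with nonnegative integer decorations. -/
structure DecTree where
  n : ℕ
  tree : SimpleGraph (Fin n)
  dec : Fin n → ℕ

def DecTree.wt (τ : DecTree) : ℕ := weightG τ.tree τ.dec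

def DecTree.decSum (τ : DecTree) : ℕ := ∑ v, τ.dec v

def DecTree.obs (τ : DecTree) {W : Type*} (T : SimpleGraph W) : ℝ := obsG τ.tree τ.dec T

/-- The strict partial order `≺` on decorated trees. -/
def DecLt (σ τ : DecTree) : Prop :=
  (σ.wt < τ.wt ∧ σ.n ≤ τ.n) ∨ (σ.wt = τ.wt ∧ σ.n < τ.n) ∨
    (σ.wt = τ.wt ∧ σ.n = τ.n ∧ σ.decSum < τ.decSum)

open Classical in
/-- `F_{τ+τ}(T)`: sum over pairs of embeddings with overlapping images. -/
def obsOverlapG {V W : Type*} [Fintype V] (τ : SimpleGraph V) (ℓ : V → ℕ)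
    (T : SimpleGraph W) : ℝ :=
  ∑ᶠ (φ₁ : τ ↪g T) (φ₂ : τ ↪g T),
    if (Set.range ⇑φ₁ ∩ Set.range ⇑φ₂).Nonempty then
      embWeight T ℓ ⇑φ₁ * embWeight T ℓ ⇑φ₂
    else 0

open Classical in
/-- `F_{τ,σ}(T)`: sum over pairs of embeddings with disjoint images. -/
def obsDisjG {V₁ V₂ W : Type*} [Fintype V₁] [Fintype V₂] (τ : SimpleGraph V₁) (ℓτ : V₁ → ℕ)
    (σ : SimpleGraph V₂) (ℓσ : V₂ → ℕ) (T : SimpleGraph W) : ℝ :=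
  ∑ᶠ (φ₁ : τ ↪g T) (φ₂ : σ ↪g T),
    if Disjoint (Set.range ⇑φ₁) (Set.range ⇑φ₂) then
      embWeight T ℓτ ⇑φ₁ * embWeight T ℓσ ⇑φ₂
    else 0

/-- `f ≈ g` : same order of magnitude, eventually. -/
def asympEquiv (f g : ℕ → ℝ) : Prop :=
  ∃ C : ℝ, 0 < C ∧ ∀ᶠ n in atTop, f n ≤ C * g n ∧ g n ≤ C * f n

/-- Descending factorial `[x]_l` of a real number. -/
def descPoch (x : ℝ) (l : ℕ) : ℝ := ∏ i ∈ Finset.range l, (x - (i : ℝ))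

/-- Total variation distance between two measures. -/
def tvDist {X : Type*} [MeasurableSpace X] (μ ν : Measure X) : ℝ :=
  ⨆ s : {s : Set X // MeasurableSet s}, |(μ ↑s).toReal - (ν ↑s).toReal|

open Classical in
/-- The contribution to `F_τ` of embeddings whose image meets the seed. -/
def obsMeetSeed (k m : ℕ) {r : ℕ} (τ : SimpleGraph (Fin r)) (ℓ : Fin r → ℕ)
    (T : SimpleGraph (Fin (k + m))) : ℝ :=
  ∑ᶠ φ : τ ↪g T,
    if ∃ (x : Fin r) (y : Fin k), φ x = Fin.castAdd m y then embWeight T ℓ ⇑φ else 0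

/-- The contribution to `F_τ` of embeddings contained in the seed. -/
def obsInSeed (k m : ℕ) {r : ℕ} (τ : SimpleGraph (Fin r)) (ℓ : Fin r → ℕ)
    (S : SimpleGraph (Fin k)) (T : SimpleGraph (Fin (k + m))) : ℝ :=
  ∑ᶠ φ : τ ↪g S, embWeight T ℓ fun u => Fin.castAdd m (φ u)

/-- `D_{τ,d}(T)`: the number of perfect embeddings of `(τ,d)` in `T`. -/
def perfCount {V W : Type*} (τ : SimpleGraph V) (d : V → ℕ) (T : SimpleGraph W) : ℕ :=
  Nat.card {φ : τ ↪g T // ∀ u, degR T (φ u) = d u}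

/-- `τ` is `(T₁,T₂)`-blind. -/
def IsBlind {V W₁ W₂ : Type*} (τ : SimpleGraph V) (T₁ : SimpleGraph W₁)
    (T₂ : SimpleGraph W₂) : Prop :=
  ∀ d : V → ℕ, (∀ u, 1 ≤ d u) → perfCount τ d T₁ = perfCount τ d T₂

/-- `D_{σ,τ,d}(T)`: perfect embeddings of `(τ,d)` meeting the seed exactly in `φ(A)`. -/
def perfCountSeed (k m : ℕ) {r : ℕ} (τ : SimpleGraph (Fin r)) (A : Finset (Fin r))
    (d : Fin r → ℕ) (T : SimpleGraph (Fin (k + m))) : ℕ :=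
  Nat.card {φ : τ ↪g T //
    (∀ u, degR T (φ u) = d u) ∧ ∀ u : Fin r, (∃ y : Fin k, φ u = Fin.castAdd m y) ↔ u ∈ A}

/-- The σ-algebra generated by `T_0, …, T_m`. -/
def natFilt {Ω : Type*} [MeasurableSpace Ω] {k : ℕ}
    (T : (m : ℕ) → Ω → SimpleGraph (Fin (k + m))) (m : ℕ) : MeasurableSpace Ω :=
  ⨆ j ∈ Set.Iic m, MeasurableSpace.comap (T j) inferInstance

/-- `(T_m)` is an α-PA chain started from the seed `S`, on the probability space `(Ω,P)`. -/
structure IsPAChain (α : ℝ) {k : ℕ} (S : SimpleGraph (Fin k)) {Ω : Type*} [MeasurableSpace Ω]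
    (P : Measure Ω) (T : (m : ℕ) → Ω → SimpleGraph (Fin (k + m))) : Prop where
  isProb : IsProbabilityMeasure P
  meas : ∀ m, Measurable (T m)
  init : ∀ᵐ ω ∂P, T 0 ω = S
  step : ∀ (m : ℕ) (f : SimpleGraph (Fin (k + (m + 1))) → ℝ),
    P[(fun ω => f (T (m + 1) ω))|natFilt T m] =ᵐ[P]
      fun ω => ∫ G, f G ∂stepMeasure α (T m ω)

/-- The natural filtration of the chain. -/
def natFiltration {Ω : Type*} [mΩ : MeasurableSpace Ω] {k : ℕ}
    (T : (m : ℕ) → Ω → SimpleGraph (Fin (k + m))) (hT : ∀ m, Measurable (T m)) :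
    Filtration ℕ mΩ where
  seq := natFilt T
  mono' _ _ hij := biSup_mono fun _ hx => le_trans hx hij
  le' _ := iSup_le fun l => iSup_le fun _ => (hT l).comap_le

/-- Isomorphism of simple graphs as a setoid. -/
def isoSetoid (n : ℕ) : Setoid (SimpleGraph (Fin n)) where
  r G H := Nonempty (G ≃g H)
  iseqv := ⟨fun G => ⟨RelIso.refl G.Adj⟩, fun ⟨e⟩ => ⟨e.symm⟩, fun ⟨e⟩ ⟨f⟩ => ⟨e.trans f⟩⟩

/-- Isomorphism classes of graphs on `n` vertices. -/
def IsoClass (n : ℕ) : Type := Quotient (isoSetoid n)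

instance (n : ℕ) : MeasurableSpace (IsoClass n) := ⊤

/-- The law of the isomorphism class of the α-PA tree with `n` vertices grown from `S`. -/
def isoClassLaw (α : ℝ) {k : ℕ} (S : SimpleGraph (Fin k)) (n : ℕ) : Measure (IsoClass n) :=
  if h : k ≤ n then
    (paLaw α S (n - k)).map fun G =>
      Quotient.mk (isoSetoid n) (G.map (finCongr (Nat.add_sub_cancel' h)).toEmbedding)
  else 0

/-! ### Products of descending factorials -/

/-- `[x]_p [x]_q` is a nonnegative integer combination of the `[x]_d`,
`max p q ≤ d ≤ p + q`, with coefficients independent of `x`. -/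
theorem exists_descFactorial_mul (p q : ℕ) :
    ∃ c : ℕ → ℕ, (∀ d, c d ≠ 0 → p ≤ d ∧ q ≤ d ∧ d ≤ p + q) ∧
      ∀ x : ℕ, x.descFactorial p * x.descFactorial q =
        ∑ d ∈ Finset.range (p + q + 1), c d * x.descFactorial d := by
  induction q with
  | zero =>
    refine ⟨fun d => if d = p then 1 else 0, ?_, ?_⟩
    · intro d hd
      have : d = p := by by_contra h; simp [h] at hd
      omega
    · intro x
      simp
  | succ q ih =>
    obtain ⟨c, hc, hx⟩ := ih
    refine ⟨fun d => (if d = 0 then 0 else c (d - 1)) + (d - q) * c d, ?_, ?_⟩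
    · intro d hd
      by_cases h1 : d ≠ 0 ∧ c (d - 1) ≠ 0
      · have := hc _ h1.2
        omega
      · have h2 : (d - q) * c d ≠ 0 := by
          intro h2
          apply hd
          simp only [h2, add_zero]
          split_ifs with h3
          · rfl
          · by_contra h4
            exact h1 ⟨h3, h4⟩
        have h3 := hc d (right_ne_zero_of_mul h2)
        have h4 := left_ne_zero_of_mul h2
        omega
    · intro x
      -- `[x]_d (x - q) = [x]_{d+1} + (d - q) [x]_d` for `q ≤ d`.
      have key : ∀ d, c d * x.descFactorial d * (x - q) =
          c d * x.descFactorial (d + 1) + (d - q) * c d * x.descFactorial d := by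
        intro d
        by_cases h0 : c d = 0
        · simp [h0]
        have hd := hc d h0
        rw [Nat.descFactorial_succ]
        by_cases hxd : x < d
        · simp [Nat.descFactorial_of_lt hxd]
        · have : x - q = (x - d) + (d - q) := by omega
          rw [this]
          ring
      have htop : c (p + q + 1) = 0 := by
        by_contra h
        have := hc _ h
        omega
      rw [Nat.descFactorial_succ, mul_comm (x - q), ← mul_assoc, hx, Finset.sum_mul]
      simp only [key, add_mul, Finset.sum_add_distrib]
      have e1 : p + (q + 1) + 1 = (p + q + 1) + 1 := by ring
      rw [e1, Finset.sum_range_succ' _ (p + q + 1)]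
      rw [Finset.sum_range_succ (fun d => (d - q) * c d * x.descFactorial d) (p + q + 1)]
      simp [htop]

/-- The coefficient of `[x]_d` in `[x]_p [x]_q`. -/
def facCoeff (p q : ℕ) : ℕ → ℕ := (exists_descFactorial_mul p q).choose

theorem facCoeff_bounds {p q d : ℕ} (h : facCoeff p q d ≠ 0) : p ≤ d ∧ q ≤ d ∧ d ≤ p + q :=
  (exists_descFactorial_mul p q).choose_spec.1 d h

theorem descFactorial_mul_eq (p q x : ℕ) : x.descFactorial p * x.descFactorial q =
    ∑ d ∈ Finset.range (p + q + 1), facCoeff p q d * x.descFactorial d :=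
  (exists_descFactorial_mul p q).choose_spec.2 x

/-! ### Gluings and overlapping pairs of embeddings -/

/-- A tree on `Fin n` together with two embeddings of `τ` that overlap and jointly cover it. -/
def Gluing {V : Type*} (τ : SimpleGraph V) (n : ℕ) : Type _ :=
  {p : Σ σ : SimpleGraph (Fin n), (τ ↪g σ) × (τ ↪g σ) //
    p.1.IsTree ∧ (∀ v, v ∈ Set.range p.2.1 ∨ v ∈ Set.range p.2.2) ∧ ∃ a b, p.2.1 a = p.2.2 b}

namespace Gluing

variable {V : Type*} {τ : SimpleGraph V} {n : ℕ}

/-- The underlying tree. -/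
def graph (p : Gluing τ n) : SimpleGraph (Fin n) := p.1.1

/-- The first copy of `τ`. -/
def left (p : Gluing τ n) : τ ↪g p.graph := p.1.2.1

/-- The second copy of `τ`. -/
def right (p : Gluing τ n) : τ ↪g p.graph := p.1.2.2

instance [Finite V] : Finite (Gluing τ n) := by
  have : ∀ σ : SimpleGraph (Fin n), Finite (τ ↪g σ) := fun σ => DFunLike.finite _
  unfold Gluing
  infer_instance

theorem isTree (p : Gluing τ n) : p.graph.IsTree := p.2.1

theorem cover (p : Gluing τ n) (v : Fin n) : v ∈ Set.range p.left ∨ v ∈ Set.range p.right :=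
  p.2.2.1 v

theorem overlap (p : Gluing τ n) : ∃ a b, p.left a = p.right b := p.2.2.2

end Gluing

/-- The union of the images of two embeddings. -/
abbrev imUnion {V W : Type*} {τ : SimpleGraph V} {T : SimpleGraph W} (x : (τ ↪g T) × (τ ↪g T)) :
    Set W := Set.range x.1 ∪ Set.range x.2

/-- The pair of embeddings of `τ` in `T` induced by a gluing and an embedding of it in `T`. -/
def glueMap {V W : Type*} {τ : SimpleGraph V} {T : SimpleGraph W} {n : ℕ}
    (q : Σ p : Gluing τ n, p.graph ↪g T) : (τ ↪g T) × (τ ↪g T) :=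
  (q.2.comp q.1.left, q.2.comp q.1.right)

section Fiber

variable {V W : Type*} {τ : SimpleGraph V} {T : SimpleGraph W} {n : ℕ}

theorem glueMap_overlap (q : Σ p : Gluing τ n, p.graph ↪g T) :
    (Set.range (glueMap q).1 ∩ Set.range (glueMap q).2).Nonempty := by
  obtain ⟨a, b, h⟩ := q.1.overlap
  refine ⟨q.2 (q.1.left a), ⟨a, rfl⟩, ⟨b, ?_⟩⟩
  change q.2 (q.1.right b) = _
  rw [h]

theorem range_glueMap (q : Σ p : Gluing τ n, p.graph ↪g T) :
    Set.range q.2 = imUnion (glueMap q) := by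
  ext w
  constructor
  · rintro ⟨v, rfl⟩
    rcases q.1.cover v with ⟨a, rfl⟩ | ⟨a, rfl⟩
    · exact Or.inl ⟨a, rfl⟩
    · exact Or.inr ⟨a, rfl⟩
  · rintro (⟨a, rfl⟩ | ⟨a, rfl⟩)
    · exact ⟨q.1.left a, rfl⟩
    · exact ⟨q.1.right a, rfl⟩

/-- A gluing embedded in `T` labels the union of the images of the induced embeddings. -/
def fiberToEquiv (x : (τ ↪g T) × (τ ↪g T))
    (q : {q : Σ p : Gluing τ n, p.graph ↪g T // glueMap q = x}) : Fin n ≃ imUnion x :=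
  (Equiv.ofInjective q.1.2 q.1.2.injective).trans
    (Equiv.setCongr ((range_glueMap q.1).trans (congrArg imUnion q.2)))

theorem fiberToEquiv_apply (x : (τ ↪g T) × (τ ↪g T))
    (q : {q : Σ p : Gluing τ n, p.graph ↪g T // glueMap q = x}) (i : Fin n) :
    (fiberToEquiv x q i : W) = q.1.2 i := rfl

/-- The labelled tree, its two copies of `τ` and its embedding are determined by the labelling:
the tree is the pull-back of `T`. -/
theorem fiberToEquiv_injective (x : (τ ↪g T) × (τ ↪g T)) :
    Function.Injective (fiberToEquiv (n := n) x) := by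
  rintro ⟨⟨⟨⟨σ, ι₁, ι₂⟩, hp⟩, ψ⟩, hq⟩ ⟨⟨⟨⟨σ', ι₁', ι₂'⟩, hp'⟩, ψ'⟩, hq'⟩ h
  have hψ : ∀ i, ψ i = ψ' i := fun i => by
    have := congrArg (fun e => ((e i : imUnion x) : W)) h
    simpa only [fiberToEquiv_apply] using this
  have hσ : σ = σ' := by
    ext i j
    have h1 : T.Adj (ψ i) (ψ j) ↔ σ.Adj i j := ψ.map_rel_iff
    have h2 : T.Adj (ψ' i) (ψ' j) ↔ σ'.Adj i j := ψ'.map_rel_iff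
    rw [← h1, ← h2, hψ, hψ]
  subst hσ
  have hψ' : ψ = ψ' := RelEmbedding.ext hψ
  subst hψ'
  have e1 : ι₁ = ι₁' := by
    ext1 a
    apply ψ.injective
    have := congrArg (fun y : (τ ↪g T) × (τ ↪g T) => y.1 a) (hq.trans hq'.symm)
    exact this
  have e2 : ι₂ = ι₂' := by
    ext1 a
    apply ψ.injective
    have := congrArg (fun y : (τ ↪g T) × (τ ↪g T) => y.2 a) (hq.trans hq'.symm)
    exact this
  subst e1
  subst e2
  rfl

/-- Every labelling of the union of two overlapping copies of `τ` in the tree `T` comes from a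
gluing: the union is a tree, being connected and contained in `T`. -/
theorem fiberToEquiv_surjective (hτ : τ.IsTree) (hT : T.IsTree) (x : (τ ↪g T) × (τ ↪g T))
    (hx : (Set.range x.1 ∩ Set.range x.2).Nonempty) :
    Function.Surjective (fiberToEquiv (n := n) x) := by
  intro e
  obtain ⟨φ₁, φ₂⟩ := x
  let f : Fin n ↪ W := ⟨fun i => (e i : W), fun i j h => e.injective (Subtype.ext h)⟩
  let σ : SimpleGraph (Fin n) := T.comap f
  let ψ : σ ↪g T := SimpleGraph.Embedding.comap f T
  let m₁ : ∀ a, imUnion (φ₁, φ₂) := fun a : V => ⟨φ₁ a, Or.inl ⟨a, rfl⟩⟩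
  let m₂ : ∀ a, imUnion (φ₁, φ₂) := fun a : V => ⟨φ₂ a, Or.inr ⟨a, rfl⟩⟩
  have h₁ : ∀ a, f (e.symm (m₁ a)) = φ₁ a := fun a =>
    congrArg Subtype.val (e.apply_symm_apply (m₁ a))
  have h₂ : ∀ a, f (e.symm (m₂ a)) = φ₂ a := fun a =>
    congrArg Subtype.val (e.apply_symm_apply (m₂ a))
  let ι₁ : τ ↪g σ :=
    { toFun := fun a => e.symm (m₁ a)
      inj' := fun a b h => φ₁.injective (by rw [← h₁, ← h₁]; exact congrArg f h)
      map_rel_iff' := by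
        intro a b
        change T.Adj (f (e.symm (m₁ a))) (f (e.symm (m₁ b))) ↔ _
        rw [h₁, h₁]
        exact φ₁.map_rel_iff }
  let ι₂ : τ ↪g σ :=
    { toFun := fun a => e.symm (m₂ a)
      inj' := fun a b h => φ₂.injective (by rw [← h₂, ← h₂]; exact congrArg f h)
      map_rel_iff' := by
        intro a b
        change T.Adj (f (e.symm (m₂ a))) (f (e.symm (m₂ b))) ↔ _
        rw [h₂, h₂]
        exact φ₂.map_rel_iff }
  have hcov : ∀ v, v ∈ Set.range ι₁ ∨ v ∈ Set.range ι₂ := by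
    intro v
    rcases (e v).2 with ⟨a, ha⟩ | ⟨a, ha⟩
    · exact Or.inl ⟨a, f.injective ((h₁ a).trans ha)⟩
    · exact Or.inr ⟨a, f.injective ((h₂ a).trans ha)⟩
  have hov : ∃ a b, ι₁ a = ι₂ b := by
    obtain ⟨w, ⟨a, ha⟩, ⟨b, hb⟩⟩ := hx
    exact ⟨a, b, f.injective ((h₁ a).trans (ha.trans (hb.symm.trans (h₂ b).symm)))⟩
  have htree : σ.IsTree := by
    obtain ⟨a, b, hab⟩ := hov
    have hr : ∀ v, σ.Reachable (ι₁ a) v := by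
      intro v
      rcases hcov v with ⟨c, rfl⟩ | ⟨c, rfl⟩
      · exact (hτ.connected.preconnected a c).map ι₁.toHom
      · rw [hab]
        exact (hτ.connected.preconnected b c).map ι₂.toHom
    have : Nonempty (Fin n) := ⟨ι₁ a⟩
    exact ⟨⟨fun u v => (hr u).symm.trans (hr v)⟩, hT.isAcyclic.embedding ψ⟩
  refine ⟨⟨⟨⟨⟨σ, ι₁, ι₂⟩, htree, hcov, hov⟩, ψ⟩, ?_⟩, ?_⟩
  · exact Prod.ext (RelEmbedding.ext h₁) (RelEmbedding.ext h₂)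
  · exact Equiv.ext fun i => Subtype.ext rfl

open Classical in
/-- The number of gluings on `Fin n`, embedded in `T`, that induce a given pair of embeddings. -/
theorem card_fiber [Finite V] [Finite W] (hτ : τ.IsTree) (hT : T.IsTree)
    (x : (τ ↪g T) × (τ ↪g T)) :
    Nat.card {q : Σ p : Gluing τ n, p.graph ↪g T // glueMap q = x} =
      if (Set.range x.1 ∩ Set.range x.2).Nonempty ∧ Nat.card (imUnion x) = n
      then n.factorial else 0 := by
  split_ifs with h
  · rw [Nat.card_eq_of_bijective (fiberToEquiv x)
      ⟨fiberToEquiv_injective x, fiberToEquiv_surjective hτ hT x h.1⟩]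
    have : Fintype (imUnion x) := Fintype.ofFinite _
    have e : Fin n ≃ imUnion x := (Finite.equivFinOfCardEq h.2).symm
    rw [Nat.card_eq_fintype_card, Fintype.card_equiv e, Fintype.card_fin]
  · have : IsEmpty {q : Σ p : Gluing τ n, p.graph ↪g T // glueMap q = x} := by
      constructor
      rintro ⟨q, rfl⟩
      apply h
      refine ⟨glueMap_overlap q, ?_⟩
      rw [← Nat.card_congr (fiberToEquiv (glueMap q) ⟨q, rfl⟩), Nat.card_fin]
    exact Nat.card_of_isEmpty

open Classical in
/-- Sums over overlapping pairs of embeddings, expressed through embeddings of gluings. The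
factor `1/n!` accounts for the labellings of the union, which has at most `2|V|` vertices. -/
theorem sum_overlap_eq [Fintype V] [Finite W] [Fintype (τ ↪g T)]
    [∀ n, Fintype (Gluing τ n)] [∀ n (p : Gluing τ n), Fintype (p.graph ↪g T)]
    (hτ : τ.IsTree) (hT : T.IsTree)
    (f : (τ ↪g T) × (τ ↪g T) → ℝ) :
    (∑ x : (τ ↪g T) × (τ ↪g T),
      if (Set.range x.1 ∩ Set.range x.2).Nonempty then f x else 0) =
    ∑ n ∈ Finset.range (2 * Fintype.card V + 1), ∑ p : Gluing τ n,
      ((n.factorial : ℝ)⁻¹ * ∑ ψ : p.graph ↪g T, f (ψ.comp p.left, ψ.comp p.right)) := by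
  have h1 : ∀ n, (∑ p : Gluing τ n,
      ((n.factorial : ℝ)⁻¹ * ∑ ψ : p.graph ↪g T, f (ψ.comp p.left, ψ.comp p.right))) =
      ∑ x : (τ ↪g T) × (τ ↪g T),
        if (Set.range x.1 ∩ Set.range x.2).Nonempty ∧ Nat.card (imUnion x) = n then f x else 0 := by
    intro n
    have hs := Fintype.sum_sigma (fun q : Σ p : Gluing τ n, p.graph ↪g T => f (glueMap q))
    rw [← Finset.mul_sum]
    change (n.factorial : ℝ)⁻¹ * (∑ p : Gluing τ n, ∑ ψ : p.graph ↪g T, f (glueMap ⟨p, ψ⟩)) = _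
    rw [← hs, ← Finset.sum_fiberwise _ glueMap, Finset.mul_sum]
    refine Finset.sum_congr rfl fun x _ => ?_
    rw [Finset.sum_congr rfl (g := fun _ => f x)
      (fun q hq => by rw [(Finset.mem_filter.1 hq).2]), Finset.sum_const]
    have hc := card_fiber (n := n) hτ hT x
    rw [Nat.card_eq_fintype_card, Fintype.card_subtype] at hc
    rw [hc]
    have hn : (n.factorial : ℝ) ≠ 0 := by exact_mod_cast n.factorial_ne_zero
    split_ifs
    · rw [nsmul_eq_mul, inv_mul_cancel_left₀ hn]
    · simp
  rw [Finset.sum_congr rfl fun n _ => h1 n, Finset.sum_comm]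
  refine Finset.sum_congr rfl fun x _ => ?_
  have hcard : Nat.card (imUnion x) < 2 * Fintype.card V + 1 := by
    have h2 : (imUnion x).ncard ≤ _ := Set.ncard_union_le (Set.range x.1) (Set.range x.2)
    have h3 : ∀ φ : τ ↪g T, (Set.range φ).ncard = Fintype.card V := fun φ => by
      rw [← Set.image_univ, Set.ncard_image_of_injective _ φ.injective, Set.ncard_univ,
        Nat.card_eq_fintype_card]
    rw [h3, h3] at h2
    rw [Nat.card_coe_set_eq]
    omega
  by_cases h : (Set.range x.1 ∩ Set.range x.2).Nonempty
  · simp only [h, true_and, Finset.sum_ite_eq, Finset.mem_range, hcard, if_true]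
  · simp [h]

end Fiber

/-! ### The weight of a gluing -/

section Weight

variable {V : Type*} {τ : SimpleGraph V} {n : ℕ}

theorem degR_le {V' : Type*} [Finite V'] {σ : SimpleGraph V'} (ι : τ ↪g σ) (a : V) :
    degR τ a ≤ degR σ (ι a) :=
  Nat.card_le_card_of_injective
    (fun w : {w // τ.Adj a w} => (⟨ι w.1, ι.map_rel_iff.2 w.2⟩ : {w // σ.Adj (ι a) w}))
    fun _ _ h => Subtype.ext (ι.injective (congrArg Subtype.val h))

/-- The decoration of `σ` carried by the copy `ι` of `(τ, ℓ)`, zero off this copy. -/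
def pushDec {V' : Type*} {σ : SimpleGraph V'} (ι : τ ↪g σ) (ℓ : V → ℕ) : V' → ℕ :=
  Function.extend ι ℓ 0

theorem pushDec_apply {V' : Type*} {σ : SimpleGraph V'} (ι : τ ↪g σ) (ℓ : V → ℕ) (a : V) :
    pushDec ι ℓ (ι a) = ℓ a := ι.injective.extend_apply _ _ _

theorem pushDec_off {V' : Type*} {σ : SimpleGraph V'} (ι : τ ↪g σ) (ℓ : V → ℕ) {v : V'}
    (hv : v ∉ Set.range ι) : pushDec ι ℓ v = 0 :=
  Function.extend_apply' _ _ _ (by simpa using hv)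

variable [Fintype V]

theorem degR_pos [Nontrivial V] (hτ : τ.IsTree) (a : V) : 0 < degR τ a := by
  obtain ⟨b, hb⟩ := hτ.connected.preconnected.exists_adj_of_nontrivial a
  have : Nonempty {w // τ.Adj a w} := ⟨⟨b, hb⟩⟩
  exact Nat.card_pos

theorem degR_eq_degree [DecidableRel τ.Adj] (v : V) : degR τ v = τ.degree v := by
  unfold degR
  rw [← SimpleGraph.card_neighborSet_eq_degree, ← Nat.card_eq_fintype_card]
  rfl

/-- The handshake formula for a tree. -/
theorem sum_degR (hτ : τ.IsTree) : ∑ v, degR τ v + 2 = 2 * Fintype.card V := by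
  classical
  have h1 := τ.sum_degrees_eq_twice_card_edges
  have h2 := hτ.card_edgeFinset
  simp only [degR_eq_degree]
  omega

/-- A tree on at least three vertices without decorations has a leaf; hence every weight is
positive. -/
theorem weightG_pos (hτ : τ.IsTree) (ℓ : V → ℕ) : 0 < weightG τ ℓ := by
  classical
  unfold weightG
  split_ifs with h
  · exact one_pos
  · by_cases h0 : ∀ v, ℓ v = 0
    · have hV : 2 < Fintype.card V := by
        by_contra hV
        exact h ⟨by omega, h0⟩
      have : Nontrivial V := Fintype.one_lt_card_iff_nontrivial.1 (by omega)
      have hex : ∃ v, degR τ v = 1 := by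
        by_contra hne
        push Not at hne
        have h2 : ∑ _v : V, 2 ≤ ∑ v, degR τ v := Finset.sum_le_sum fun v _ => by
          have := degR_pos hτ v
          have := hne v
          omega
        have h3 := sum_degR hτ
        simp at h2
        omega
      obtain ⟨v, hv⟩ := hex
      have : Nonempty {v // degR τ v = 1 ∧ ℓ v = 0} := ⟨⟨v, hv, h0 v⟩⟩
      have : 0 < Nat.card {v // degR τ v = 1 ∧ ℓ v = 0} := Nat.card_pos
      omega
    · push Not at h0
      obtain ⟨v, hv⟩ := h0
      have := Finset.single_le_sum (f := ℓ) (fun i _ => Nat.zero_le _) (Finset.mem_univ v)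
      omega

theorem sum_pushDec {V' : Type*} [Fintype V'] {σ : SimpleGraph V'} (ι : τ ↪g σ) (ℓ : V → ℕ) :
    ∑ v, pushDec ι ℓ v = ∑ a, ℓ a :=
  (Fintype.sum_of_injective ι ι.injective _ _ (fun _ hv => pushDec_off ι ℓ hv)
    fun a => (pushDec_apply ι ℓ a).symm).symm

theorem embWeight_comp {V' W : Type*} [Fintype V'] {σ : SimpleGraph V'} {T : SimpleGraph W}
    (ι : τ ↪g σ) (ℓ : V → ℕ) (ψ : σ ↪g T) :
    embWeight T ℓ (ψ.comp ι) = embWeight T (pushDec ι ℓ) ψ :=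
  Fintype.prod_of_injective ι ι.injective _ _
    (fun v hv => by simp [pushDec_off ι ℓ hv]) fun a => by
      rw [pushDec_apply]
      rfl

theorem Gluing.card_le (p : Gluing τ n) :
    n + 1 ≤ 2 * Fintype.card V ∧ Fintype.card V ≤ n := by
  constructor
  · obtain ⟨a, b, hab⟩ := p.overlap
    have h3 : ∀ ι : τ ↪g p.graph, (Set.range ι).ncard = Fintype.card V := fun φ => by
      rw [← Set.image_univ, Set.ncard_image_of_injective _ φ.injective, Set.ncard_univ,
        Nat.card_eq_fintype_card]
    have h4 := Set.ncard_union_add_ncard_inter (Set.range p.left) (Set.range p.right)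
    have h5 : Set.range p.left ∪ Set.range p.right = Set.univ :=
      Set.eq_univ_of_forall p.cover
    have h6 : 0 < (Set.range p.left ∩ Set.range p.right).ncard :=
      (Set.ncard_pos (Set.toFinite _)).2 ⟨p.left a, ⟨a, rfl⟩, ⟨b, hab.symm⟩⟩
    rw [h5, h3, h3, Set.ncard_univ, Nat.card_fin] at h4
    omega
  · have := Fintype.card_le_of_injective p.left p.left.injective
    simpa using this

/-- Each loose leaf of a gluing comes from a loose leaf of `τ`, in one of the two copies. -/
theorem card_loose_le (hτ : τ.IsTree) (ℓ : V → ℕ) (p : Gluing τ n) (d : Fin n → ℕ)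
    (h₁ : ∀ v, pushDec p.left ℓ v ≤ d v) (h₂ : ∀ v, pushDec p.right ℓ v ≤ d v) :
    Nat.card {v // degR p.graph v = 1 ∧ d v = 0} ≤
      2 * Nat.card {a // degR τ a = 1 ∧ ℓ a = 0} := by
  rcases subsingleton_or_nontrivial V with hV | hV
  · have hc : Fintype.card V ≤ 1 := Fintype.card_le_one_iff_subsingleton.2 hV
    have hn := p.card_le.1
    have hs := sum_degR p.isTree
    have : IsEmpty {v // degR p.graph v = 1 ∧ d v = 0} := by
      constructor
      rintro ⟨v, hv, -⟩
      have := Finset.single_le_sum (f := degR p.graph) (fun i _ => Nat.zero_le _)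
        (Finset.mem_univ v)
      rw [Fintype.card_fin] at hs
      omega
    rw [Nat.card_of_isEmpty]
    exact Nat.zero_le _
  · set L : Set V := {a | degR τ a = 1 ∧ ℓ a = 0} with hL
    have hloose : ∀ (ι : τ ↪g p.graph) (a : V), (∀ v, pushDec ι ℓ v ≤ d v) →
        degR p.graph (ι a) = 1 → d (ι a) = 0 → a ∈ L := by
      intro ι a h hd h0
      have k1 := degR_le ι a
      have k2 := degR_pos hτ a
      have k3 := h (ι a)
      rw [pushDec_apply] at k3
      exact ⟨by omega, by omega⟩
    have hsub : {v | degR p.graph v = 1 ∧ d v = 0} ⊆ p.left '' L ∪ p.right '' L := by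
      rintro v ⟨hv, h0⟩
      rcases p.cover v with ⟨a, rfl⟩ | ⟨a, rfl⟩
      · exact Or.inl ⟨a, hloose _ a h₁ hv h0, rfl⟩
      · exact Or.inr ⟨a, hloose _ a h₂ hv h0, rfl⟩
    have k1 := Set.ncard_le_ncard hsub (Set.toFinite _)
    have k2 := Set.ncard_union_le (p.left '' L) (p.right '' L)
    rw [Set.ncard_image_of_injective _ p.left.injective,
      Set.ncard_image_of_injective _ p.right.injective] at k2
    change Set.ncard {v | degR p.graph v = 1 ∧ d v = 0} ≤ 2 * Set.ncard L
    omega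

theorem weightG_gluing_le (hτ : τ.IsTree) (ℓ : V → ℕ) (p : Gluing τ n) (d : Fin n → ℕ)
    (h₁ : ∀ v, pushDec p.left ℓ v ≤ d v) (h₂ : ∀ v, pushDec p.right ℓ v ≤ d v)
    (h₃ : ∀ v, d v ≤ pushDec p.left ℓ v + pushDec p.right ℓ v) :
    weightG p.graph d ≤ 2 * weightG τ ℓ := by
  have hpos := weightG_pos hτ ℓ
  have hsum : ∑ v, d v ≤ 2 * ∑ a, ℓ a := by
    refine (Finset.sum_le_sum fun v _ => h₃ v).trans ?_
    rw [Finset.sum_add_distrib, sum_pushDec, sum_pushDec, two_mul]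
  by_cases hσ : Fintype.card (Fin n) ≤ 2 ∧ ∀ v, d v = 0
  · rw [weightG, if_pos hσ]
    omega
  by_cases hτ' : Fintype.card V ≤ 2 ∧ ∀ v, ℓ v = 0
  · rw [weightG, if_neg hσ, weightG, if_pos hτ']
    -- Here `σ` is a path with three vertices, which has at most two leaves.
    have hd : ∑ v, d v = 0 := by
      rw [Finset.sum_eq_zero (s := Finset.univ) (f := ℓ) fun v _ => hτ'.2 v] at hsum
      omega
    have hd0 : ∀ v, d v = 0 := fun v => Finset.sum_eq_zero_iff.1 hd v (Finset.mem_univ v)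
    have hn : n = 3 := by
      have := p.card_le.1
      have : ¬ n ≤ 2 := fun h => hσ ⟨by simpa using h, hd0⟩
      omega
    rw [hd, zero_add]
    by_contra hlt
    have hall : ∀ v, degR p.graph v = 1 := by
      have huniv : {v | degR p.graph v = 1 ∧ d v = 0} = Set.univ := by
        apply Set.eq_of_subset_of_ncard_le (Set.subset_univ _) _ (Set.toFinite _)
        rw [Set.ncard_univ, Nat.card_fin, ← Nat.card_coe_set_eq]
        change _ ≤ Nat.card {v // degR p.graph v = 1 ∧ d v = 0}
        omega
      intro v
      exact (huniv.symm ▸ Set.mem_univ v : v ∈ {v | degR p.graph v = 1 ∧ d v = 0}).1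
    have hs := sum_degR p.isTree
    simp only [hall, Finset.sum_const, Finset.card_univ, Fintype.card_fin, smul_eq_mul] at hs
    omega
  · rw [weightG, if_neg hσ, weightG, if_neg hτ']
    have := card_loose_le hτ ℓ p d h₁ h₂
    omega

end Weight

/-! ### Nonnegative combinations of observables -/

open Classical in
/-- `G` is a finite combination, with nonnegative coefficients, of observables of decorated trees
of weight at most `B`. -/
def IsComb (B : ℕ) (G : ∀ (W : Type) [Fintype W], SimpleGraph W → ℝ) : Prop :=
  ∃ c : DecTree →₀ NNReal, (∀ σ ∈ c.support, σ.tree.IsTree ∧ σ.wt ≤ B) ∧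
    ∀ (W : Type) [Fintype W] (T : SimpleGraph W), T.IsTree →
      G W T = c.sum fun σ a => (a : ℝ) * σ.obs T

namespace IsComb

variable {B : ℕ} {G H : ∀ (W : Type) [Fintype W], SimpleGraph W → ℝ}

theorem congr (hG : IsComb B G)
    (h : ∀ (W : Type) [Fintype W] (T : SimpleGraph W), T.IsTree → H W T = G W T) :
    IsComb B H := by
  obtain ⟨c, hc, hcG⟩ := hG
  exact ⟨c, hc, fun W _ T hT => (h W T hT).trans (hcG W T hT)⟩

theorem zero : IsComb B fun _ _ _ => 0 := ⟨0, by simp, fun _ _ _ _ => by simp⟩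

theorem add (hG : IsComb B G) (hH : IsComb B H) : IsComb B fun W _ T => G W T + H W T := by
  classical
  obtain ⟨c, hc, hcG⟩ := hG
  obtain ⟨c', hc', hcH⟩ := hH
  refine ⟨c + c', fun σ hσ => ?_, fun W _ T hT => ?_⟩
  · rcases Finset.mem_union.1 (Finsupp.support_add hσ) with h | h
    · exact hc σ h
    · exact hc' σ h
  · rw [Finsupp.sum_add_index' (by simp) (by intros; push_cast; ring), ← hcG W T hT, ← hcH W T hT]

theorem sum {ι : Type*} (s : Finset ι)
    {F : ι → ∀ (W : Type) [Fintype W], SimpleGraph W → ℝ} (h : ∀ i ∈ s, IsComb B (F i)) :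
    IsComb B fun W _ T => ∑ i ∈ s, F i W T := by
  classical
  induction s using Finset.induction_on with
  | empty => simpa using zero
  | insert i s hi ih =>
    simp only [Finset.sum_insert hi]
    exact (h i (Finset.mem_insert_self i s)).add
      (ih fun j hj => h j (Finset.mem_insert_of_mem hj))

theorem smul_obs (k : NNReal) (σ : DecTree) (h : k ≠ 0 → σ.tree.IsTree ∧ σ.wt ≤ B) :
    IsComb B fun _ _ T => (k : ℝ) * σ.obs T := by
  classical
  refine ⟨Finsupp.single σ k, fun σ' hσ' => ?_, fun W _ T _ => ?_⟩
  · rw [Finsupp.mem_support_iff, Finsupp.single_apply] at hσ'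
    split_ifs at hσ' with heq
    · exact heq ▸ h hσ'
    · exact absurd rfl hσ'
  · rw [Finsupp.sum_single_index (by simp)]

end IsComb

theorem obsG_eq_sum {V W : Type*} [Fintype V] {τ : SimpleGraph V} (ℓ : V → ℕ) (T : SimpleGraph W)
    [Fintype (τ ↪g T)] : obsG τ ℓ T = ∑ φ : τ ↪g T, embWeight T ℓ φ :=
  finsum_eq_sum_of_fintype _

theorem embWeight_mul {V W : Type*} [Fintype V] [DecidableEq V] (T : SimpleGraph W)
    (m₁ m₂ : V → ℕ) (f : V → W) :
    embWeight T m₁ f * embWeight T m₂ f =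
      ∑ d ∈ Fintype.piFinset fun v => Finset.range (m₁ v + m₂ v + 1),
        (∏ v, (facCoeff (m₁ v) (m₂ v) (d v) : ℝ)) * embWeight T d f := by
  unfold embWeight
  simp only [← Finset.prod_mul_distrib]
  rw [← Finset.prod_univ_sum (fun v => Finset.range (m₁ v + m₂ v + 1))
    (fun v k => (facCoeff (m₁ v) (m₂ v) k : ℝ) * ((degR T (f v) - 1).descFactorial k : ℝ))]
  exact Finset.prod_congr rfl fun v _ => by exact_mod_cast descFactorial_mul_eq _ _ _

/-- The contribution of a single gluing is a combination of observables. -/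
theorem isComb_gluing {V : Type*} [Fintype V] {τ : SimpleGraph V} (hτ : τ.IsTree) (ℓ : V → ℕ)
    {n : ℕ} (p : Gluing τ n) (k : NNReal)
    [∀ (W : Type) [Fintype W] (T : SimpleGraph W), Fintype (p.graph ↪g T)] :
    IsComb (2 * weightG τ ℓ) fun _ _ T => (k : ℝ) * ∑ ψ : p.graph ↪g T,
      embWeight T ℓ (ψ.comp p.left) * embWeight T ℓ (ψ.comp p.right) := by
  let m₁ := pushDec p.left ℓ
  let m₂ := pushDec p.right ℓ
  let K : (Fin n → ℕ) → NNReal := fun d => k * ∏ v, (facCoeff (m₁ v) (m₂ v) (d v) : NNReal)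
  refine IsComb.congr (IsComb.sum (Fintype.piFinset fun v => Finset.range (m₁ v + m₂ v + 1))
    fun d _ => IsComb.smul_obs (K d) ⟨n, p.graph, d⟩ fun hK => ⟨p.isTree, ?_⟩) ?_
  · have hd : ∀ v, m₁ v ≤ d v ∧ m₂ v ≤ d v ∧ d v ≤ m₁ v + m₂ v := fun v => by
      apply facCoeff_bounds
      have := Finset.prod_ne_zero_iff.1 (right_ne_zero_of_mul hK) v (Finset.mem_univ v)
      exact_mod_cast this
    exact weightG_gluing_le hτ ℓ p d (fun v => (hd v).1) (fun v => (hd v).2.1)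
      fun v => (hd v).2.2
  · intro W _ T _
    simp only [embWeight_comp, embWeight_mul, DecTree.obs, obsG_eq_sum, K, m₁, m₂]
    rw [Finset.sum_comm, Finset.mul_sum]
    refine Finset.sum_congr rfl fun d _ => ?_
    rw [← Finset.mul_sum]
    push_cast
    ring

/-- Summing over the gluings gives the decomposition of `F_{τ+τ}`. -/
theorem isComb_overlap (τ : DecTree) (hτ : τ.tree.IsTree) :
    IsComb (2 * τ.wt) fun _ _ T => obsOverlapG τ.tree τ.dec T := by
  classical
  have : ∀ n, Fintype (Gluing τ.tree n) := fun n => Fintype.ofFinite _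
  have hfin : ∀ {k : ℕ} (σ : SimpleGraph (Fin k)) (W : Type) [Fintype W] (T : SimpleGraph W),
      Finite (σ ↪g T) := fun σ W _ T => DFunLike.finite _
  have hτfin : ∀ (W : Type) [Fintype W] (T : SimpleGraph W), Fintype (τ.tree ↪g T) :=
    fun W _ T => @Fintype.ofFinite _ (hfin _ W T)
  have hpfin : ∀ n (p : Gluing τ.tree n) (W : Type) [Fintype W] (T : SimpleGraph W),
      Fintype (p.graph ↪g T) := fun n p W _ T => @Fintype.ofFinite _ (hfin _ W T)
  refine IsComb.congr (IsComb.sum (Finset.range (2 * Fintype.card (Fin τ.n) + 1)) fun n _ =>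
    IsComb.sum (Finset.univ : Finset (Gluing τ.tree n)) fun p _ =>
      @isComb_gluing _ _ _ hτ τ.dec n p ((n.factorial : NNReal)⁻¹) (hpfin n p)) ?_
  intro W _ T hT
  have := hτfin W T
  let _ := fun n (p : Gluing τ.tree n) => hpfin n p W T
  have key := sum_overlap_eq hτ hT fun x => embWeight T τ.dec x.1 * embWeight T τ.dec x.2
  unfold obsOverlapG
  rw [finsum_eq_sum_of_fintype]
  simp only [finsum_eq_sum_of_fintype]
  rw [Fintype.sum_prod_type] at key
  push_cast
  exact key

/-- **Lemma 3.7.** For any decorated tree `τ` there are a finite set `U(τ)`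
of decorated trees of weight at most `2w(τ)` and positive constants `C(τ,σ)` such that
`F_{τ+τ}(T) = Σ_{σ∈U(τ)} C(τ,σ)·F_σ(T)` for every finite tree `T`. -/
theorem overlap_decomposition (τ : DecTree) (hτ : τ.tree.IsTree) :
    ∃ (U : Finset DecTree) (C : DecTree → ℝ),
      (∀ σ ∈ U, σ.tree.IsTree ∧ σ.wt ≤ 2 * τ.wt) ∧
      (∀ σ ∈ U, 0 < C σ) ∧
      ∀ (W : Type) [Fintype W] (T : SimpleGraph W), T.IsTree →
        obsOverlapG τ.tree τ.dec T = ∑ σ ∈ U, C σ * σ.obs T := by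
  obtain ⟨c, hc, h⟩ := isComb_overlap τ hτ
  refine ⟨c.support, fun σ => (c σ : ℝ), hc, fun σ hσ => ?_, fun W _ T hT => h W T hT⟩
  exact_mod_cast pos_iff_ne_zero.2 (Finsupp.mem_support_iff.1 hσ)

end AffinePA
end
end

section
/- Let τ = (τ, ℓ) be a decorated tree with w(τ) ≥ 2, let v be a loose leaf of τ and u its unique neighbour in τ. Then for every finite tree T: F_{(τ∖v)^+}(T) = F_τ(T) + (deg_τ(u) − ℓ(u) − 2)·F_{τ∖v}(T). -/
/-! Every embedding of `τ` restricts to an embedding `ψ` of `τ ∖ v` with the same weight, because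
`ℓ v = 0`. Conversely (`card_fiber`), `ψ` extends by sending `v` to any neighbour of `ψ u` outside
the image of `ψ`: since `τ ∖ v` is connected and `T` has no cycle, such a vertex has no further
neighbour in the image, so the extension is again an induced embedding. There are
`deg_T (ψ u) - (deg_τ u - 1)` such neighbours (`degR_image`, `degR_del`). On the other side,
`[d - 1]_{ℓ u + 1} = (d - 1 - ℓ u) [d - 1]_{ℓ u}` with `d = deg_T (ψ u)` (`embWeight_succ`), and
`d - 1 - ℓ u = (d - (deg_τ u - 1)) + (deg_τ u - ℓ u - 2)`.

The hypothesis `w(τ) ≥ 2` matters when `d = 0`, where the natural number `d - 1` is truncated: then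
`τ` is a single edge, so `ℓ u > 0` (`dec_pos`) and all terms vanish. -/

open MeasureTheory Filter Asymptotics

noncomputable section

namespace AffinePA

/-- Deleting the loose leaf `v` from `τ`. -/
abbrev del {V : Type*} (τ : SimpleGraph V) (v : V) : SimpleGraph {x : V // x ≠ v} :=
  τ.comap (Subtype.val : {x : V // x ≠ v} → V)

/-- The restriction of an embedding of `τ` to `τ ∖ v`. -/
def restr {V W : Type*} {τ : SimpleGraph V} {T : SimpleGraph W} (v : V) (φ : τ ↪g T) :
    del τ v ↪g T :=
  (SimpleGraph.Embedding.comap (Function.Embedding.subtype _) τ).trans φ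

lemma restr_apply {V W : Type*} {τ : SimpleGraph V} {T : SimpleGraph W} (v : V) (φ : τ ↪g T)
    (x : {x : V // x ≠ v}) : restr v φ x = φ x := rfl

lemma leaf_unique {V : Type*} {τ : SimpleGraph V} {v u : V}
    (hdeg : degR τ v = 1) (hadj : τ.Adj v u) {x : V} (hx : τ.Adj v x) : x = u := by
  have h := (Nat.card_eq_one_iff_unique.mp hdeg).1
  exact congrArg Subtype.val (h.elim (⟨x, hx⟩ : {w // τ.Adj v w}) ⟨u, hadj⟩)

lemma del_connected {V : Type*} [Fintype V] {τ : SimpleGraph V} (hτ : τ.IsTree) {v : V}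
    (hdeg : degR τ v = 1) : (del τ v).Connected := by
  classical
  have h : τ.degree v = 1 := by
    rw [← SimpleGraph.card_neighborSet_eq_degree, ← Nat.card_eq_fintype_card]
    exact hdeg
  exact hτ.1.induce_compl_singleton_of_degree_eq_one h

/-- A vertex outside the image of a connected graph embedded in a forest has at most one neighbour
in the image, as two of them would close a cycle. -/
lemma image_neighbour_unique {V W : Type*} {σ : SimpleGraph V} (hσ : σ.Connected)
    {T : SimpleGraph W} (hT : T.IsAcyclic) (ψ : σ ↪g T) {w : W} (hw : w ∉ Set.range ψ)
    {x y : V} (hx : T.Adj (ψ x) w) (hy : T.Adj (ψ y) w) : x = y := by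
  classical
  by_contra hne
  obtain ⟨p, hp⟩ := hσ.exists_isPath x y
  have hq : (p.map ψ.toHom).IsPath := hp.map ψ.injective
  have hxy : ψ x ≠ ψ y := fun h => hne (ψ.injective h)
  have hr : (SimpleGraph.Walk.cons hx (SimpleGraph.Walk.cons hy.symm .nil)).IsPath := by
    simp [SimpleGraph.Walk.cons_isPath_iff, hx.ne, hy.ne', hxy]
  have h := congrArg Subtype.val ((hT.subsingleton_path _ _).elim ⟨_, hq⟩ ⟨_, hr⟩)
  have h' : w ∈ (p.map ψ.toHom).support := by
    rw [show p.map ψ.toHom = _ from h]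
    simp
  rw [SimpleGraph.Walk.support_map, List.mem_map] at h'
  obtain ⟨z, -, hz⟩ := h'
  exact hw ⟨z, hz⟩

/-- Extending an embedding of `τ ∖ v` to one of `τ` amounts to choosing for `v` a neighbour, outside
the image, of the image of `u`. -/
lemma card_fiber_s10 {V W : Type*} [Fintype V] {τ : SimpleGraph V} (hτ : τ.IsTree)
    {v u : V} (hdeg : degR τ v = 1) (hadj : τ.Adj v u) {T : SimpleGraph W} (hT : T.IsAcyclic)
    (ψ : del τ v ↪g T) :
    Nat.card {φ : τ ↪g T // restr v φ = ψ} =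
      Nat.card {w : W // T.Adj (ψ ⟨u, hadj.ne'⟩) w ∧ w ∉ Set.range ψ} := by
  classical
  refine Nat.card_congr (Equiv.ofBijective (fun φ => ⟨φ.1 v, ?_, ?_⟩) ⟨?_, ?_⟩)
  · obtain ⟨φ, rfl⟩ := φ
    exact φ.map_rel_iff.2 hadj.symm
  · rintro ⟨x, hx⟩
    obtain ⟨φ, rfl⟩ := φ
    exact x.2 (φ.injective hx)
  · rintro ⟨φ, hφ⟩ ⟨φ', hφ'⟩ h
    have hv : φ v = φ' v := congrArg Subtype.val h
    ext x
    by_cases hx : x = v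
    · rw [hx]; exact hv
    · exact DFunLike.congr_fun (hφ.trans hφ'.symm) (⟨x, hx⟩ : {x : V // x ≠ v})
  · rintro ⟨w, hw, hwr⟩
    have hwx : ∀ x, T.Adj w (ψ x) ↔ τ.Adj v x := by
      intro x
      constructor
      · intro h
        rw [image_neighbour_unique (del_connected hτ hdeg) hT ψ hwr h.symm hw]
        exact hadj
      · intro h
        have : x = ⟨u, hadj.ne'⟩ := Subtype.ext (leaf_unique hdeg hadj h)
        rw [this]
        exact hw.symm
    let f : V → W := fun x => if h : x = v then w else ψ ⟨x, h⟩
    have fv : f v = w := dif_pos rfl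
    have fx : ∀ x : {x : V // x ≠ v}, f x = ψ x := fun x => dif_neg x.2
    have hinj : Function.Injective f := by
      intro a b hab
      by_cases ha : a = v <;> by_cases hb : b = v
      · rw [ha, hb]
      · rw [ha, fv, fx ⟨b, hb⟩] at hab
        exact (hwr ⟨_, hab.symm⟩).elim
      · rw [hb, fv, fx ⟨a, ha⟩] at hab
        exact (hwr ⟨_, hab⟩).elim
      · rw [fx ⟨a, ha⟩, fx ⟨b, hb⟩] at hab
        exact congrArg Subtype.val (ψ.injective hab)
    have hrel : ∀ {a b : V}, T.Adj (f a) (f b) ↔ τ.Adj a b := by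
      intro a b
      by_cases ha : a = v <;> by_cases hb : b = v
      · rw [ha, hb]; simp
      · rw [ha, fv, fx ⟨b, hb⟩]
        exact hwx ⟨b, hb⟩
      · rw [hb, fv, fx ⟨a, ha⟩, T.adj_comm, τ.adj_comm]
        exact hwx ⟨a, ha⟩
      · rw [fx ⟨a, ha⟩, fx ⟨b, hb⟩]
        exact ψ.map_rel_iff
    exact ⟨⟨⟨⟨f, hinj⟩, hrel⟩, RelEmbedding.ext fun x => fx x⟩, Subtype.ext fv⟩

lemma degR_del {V : Type*} [Fintype V] {τ : SimpleGraph V} {v u : V} (hadj : τ.Adj v u) :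
    degR τ u = degR (del τ v) ⟨u, hadj.ne'⟩ + 1 := by
  classical
  have h1 : {w // τ.Adj u w ∧ w ≠ v} ≃ {x : {x : V // x ≠ v} // (del τ v).Adj ⟨u, hadj.ne'⟩ x} :=
    { toFun := fun w => ⟨⟨w.1, w.2.2⟩, w.2.1⟩
      invFun := fun x => ⟨x.1.1, x.2, x.1.2⟩
      left_inv := fun _ => rfl
      right_inv := fun _ => rfl }
  unfold degR
  rw [← Nat.card_congr h1, Nat.card_eq_fintype_card, Nat.card_eq_fintype_card,
    Fintype.card_subtype, Fintype.card_subtype, ← Finset.filter_filter, Finset.filter_ne',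
    Finset.card_erase_add_one]
  simpa using hadj.symm

lemma degR_image {V W : Type*} [Fintype W] {σ : SimpleGraph V} {T : SimpleGraph W}
    (ψ : σ ↪g T) (u : V) :
    degR T (ψ u) = degR σ u + Nat.card {w : W // T.Adj (ψ u) w ∧ w ∉ Set.range ψ} := by
  classical
  have h1 : Nat.card {x // σ.Adj u x} = Nat.card {w : W // T.Adj (ψ u) w ∧ w ∈ Set.range ψ} := by
    refine Nat.card_congr (Equiv.ofBijective
      (fun x => ⟨ψ x.1, ψ.map_rel_iff.2 x.2, x.1, rfl⟩) ⟨?_, ?_⟩)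
    · intro x y h
      exact Subtype.ext (ψ.injective (congrArg Subtype.val h))
    · rintro ⟨_, hw, x, rfl⟩
      exact ⟨⟨x, ψ.map_rel_iff.1 hw⟩, rfl⟩
  unfold degR
  rw [h1]
  simp only [Nat.card_eq_fintype_card, Fintype.card_subtype]
  rw [← Finset.filter_filter, ← Finset.filter_filter, Finset.card_filter_add_card_filter_not]

/-- The vertex `v` carries decoration `0`, hence contributes a factor `1`. -/
lemma embWeight_restr {V W : Type*} [Fintype V] [DecidableEq V] {τ : SimpleGraph V}
    {T : SimpleGraph W} {ℓ : V → ℕ} {v : V} (hv : ℓ v = 0) (φ : τ ↪g T) :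
    embWeight T ℓ φ = embWeight T (fun x : {x : V // x ≠ v} => ℓ x) (restr v φ) := by
  unfold embWeight
  rw [Fintype.prod_eq_mul_prod_subtype_ne _ v, hv]
  simp [restr_apply]

/-- The recursion `[n]_{k+1} = (n - k) [n]_k`, over the reals. -/
lemma cast_descFactorial_succ (n k : ℕ) :
    ((n.descFactorial (k + 1) : ℕ) : ℝ) = ((n : ℝ) - k) * (n.descFactorial k : ℝ) := by
  rw [Nat.descFactorial_succ]
  rcases le_or_gt k n with h | h
  · push_cast [Nat.cast_sub h]; ring
  · rw [Nat.descFactorial_of_lt h]; simp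

lemma embWeight_succ {X W : Type*} [Fintype X] (T : SimpleGraph W) {m m' : X → ℕ} {u : X}
    (hu : m' u = m u + 1) (hne : ∀ x, x ≠ u → m' x = m x) (f : X → W) :
    embWeight T m' f = (((degR T (f u) - 1 : ℕ) : ℝ) - m u) * embWeight T m f := by
  classical
  unfold embWeight
  rw [Fintype.prod_eq_mul_prod_subtype_ne _ u, Fintype.prod_eq_mul_prod_subtype_ne _ u, hu,
    cast_descFactorial_succ, mul_assoc]
  congr 2
  exact Finset.prod_congr rfl fun x _ => by rw [hne _ x.2]

/-- If `u` has no neighbour but `v`, the tree `τ` is a single edge, so that `w(τ) ≥ 2` forces `u` to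
carry a positive decoration. -/
lemma dec_pos {V : Type*} [Fintype V] {τ : SimpleGraph V} (hτ : τ.IsTree) {ℓ : V → ℕ}
    (hw : 2 ≤ weightG τ ℓ) {v u : V} (hdeg : degR τ v = 1) (hdec : ℓ v = 0) (hadj : τ.Adj v u)
    (h0 : degR (del τ v) ⟨u, hadj.ne'⟩ = 0) : ℓ u ≠ 0 := by
  classical
  intro hu
  have hall : ∀ x, x = v ∨ x = u := by
    intro x
    by_contra! hx
    have : Nontrivial {x : V // x ≠ v} :=
      ⟨⟨x, hx.1⟩, ⟨u, hadj.ne'⟩, fun h => hx.2 (congrArg Subtype.val h)⟩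
    obtain ⟨y, hy⟩ := (del_connected hτ hdeg).preconnected.exists_adj_of_nontrivial ⟨u, hadj.ne'⟩
    have := Finite.card_eq_zero_iff.mp h0
    exact this.false ⟨y, hy⟩
  have hcard : Fintype.card V ≤ 2 := by
    rw [← Finset.card_univ]
    refine (Finset.card_le_card (t := {v, u}) fun x _ => ?_).trans Finset.card_le_two
    simpa using hall x
  have hzero : ∀ x, ℓ x = 0 := fun x => by
    rcases hall x with rfl | rfl <;> assumption
  rw [weightG, if_pos ⟨hcard, hzero⟩] at hw
  omega

/-- Grouping the embeddings of `τ` by their restriction to `τ ∖ v`. -/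
lemma obsG_eq_sum_fiber {V W : Type*} [Fintype V] [DecidableEq V] [Fintype W] {τ : SimpleGraph V}
    {T : SimpleGraph W} {ℓ : V → ℕ} {v : V} (hv : ℓ v = 0) [Fintype (del τ v ↪g T)] :
    obsG τ ℓ T = ∑ ψ : del τ v ↪g T, (Nat.card {φ : τ ↪g T // restr v φ = ψ} : ℝ) *
      embWeight T (fun x : {x : V // x ≠ v} => ℓ x) ψ := by
  classical
  have : Finite (τ ↪g T) := DFunLike.finite _
  let _ := Fintype.ofFinite (τ ↪g T)
  rw [obsG, finsum_eq_sum_of_fintype, ← Fintype.sum_fiberwise (restr v)]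
  refine Finset.sum_congr rfl fun ψ _ => ?_
  rw [Nat.card_eq_fintype_card, ← nsmul_eq_mul, ← Finset.card_univ]
  refine Finset.sum_eq_card_nsmul fun φ _ => ?_
  rw [embWeight_restr hv, φ.2]

/-- **Lemma 3.4 / Lemma `combinatoriallemma`.** Let `τ` be a decorated tree
with `w(τ) ≥ 2`, `v` a loose leaf with unique neighbour `u`. Then for every finite tree `T`:
`F_{(τ∖v)⁺}(T) = F_τ(T) + (deg_τ(u) - ℓ(u) - 2)·F_{τ∖v}(T)`. -/
theorem loose_leaf_identity {V : Type*} [Fintype V] [DecidableEq V]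
    (τ : SimpleGraph V) (hτ : τ.IsTree) (ℓ : V → ℕ) (hw : 2 ≤ weightG τ ℓ)
    (v u : V) (hleafdeg : degR τ v = 1) (hleafdec : ℓ v = 0) (hadj : τ.Adj v u) :
    ∀ (W : Type) [Fintype W] (T : SimpleGraph W), T.IsTree →
      obsG (τ.comap (Subtype.val : {x : V // x ≠ v} → V))
          (fun x => if (x : V) = u then ℓ u + 1 else ℓ (x : V)) T =
        obsG τ ℓ T +
          ((degR τ u : ℝ) - (ℓ u : ℝ) - 2) *
            obsG (τ.comap (Subtype.val : {x : V // x ≠ v} → V)) (fun x => ℓ (x : V)) T := by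
  classical
  intro W _ T hT
  have : Finite (del τ v ↪g T) := DFunLike.finite _
  let _ := Fintype.ofFinite (del τ v ↪g T)
  rw [obsG_eq_sum_fiber hleafdec, obsG, obsG, finsum_eq_sum_of_fintype, finsum_eq_sum_of_fintype,
    Finset.mul_sum, ← Finset.sum_add_distrib]
  refine Finset.sum_congr rfl fun ψ _ => ?_
  have hu : u ≠ v := hadj.ne'
  rw [embWeight_succ T (m := fun x : {x : V // x ≠ v} => ℓ x) (u := ⟨u, hu⟩) (if_pos rfl)
      (fun x hx => if_neg fun h => hx (Subtype.ext h)),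
    ← add_mul, card_fiber_s10 hτ hleafdeg hadj hT.isAcyclic ψ, degR_del hadj]
  have hd := degR_image ψ ⟨u, hu⟩
  rcases Nat.eq_zero_or_pos (degR T (ψ ⟨u, hu⟩)) with h0 | hpos
  -- Here `deg - 1` is truncated, but both sides contain the factor `[0]_{ℓ u} = 0`.
  · have hl : ℓ u ≠ 0 := dec_pos hτ hw hleafdeg hleafdec hadj
      (Nat.add_eq_zero_iff.mp (hd.symm.trans h0)).1
    have hz : embWeight T (fun x : {x : V // x ≠ v} => ℓ x) ψ = 0 := by
      refine Finset.prod_eq_zero (Finset.mem_univ ⟨u, hu⟩) ?_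
      rw [h0, Nat.descFactorial_of_lt (by simpa using Nat.pos_of_ne_zero hl), Nat.cast_zero]
    rw [hz, mul_zero, mul_zero]
  · congr 1
    rw [Nat.cast_sub hpos, hd]
    push_cast
    ring

end AffinePA
end
end
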